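/- Suppose φ is an efficient, strategy-proof, non-bossy, and normalized-cone-continuous rule on three agents and three objects. Let u be a profile and i an agent such that |supp(φ_i(u))| ≤ 2. Then for any no-ties utility u_i' inducing the same strict order as u_i, φ(u_i', u_{-i}) = φ(u). -/

import Mathlib

/-!
Fix the utilities of two agents and an order `a ≻ b ≻ c` of the third. By strategy-proofness the
probability of the middle object `b` is nondecreasing in the rate of middle substitution, and when
it increases, the probabilities of `a` and of `c` decrease strictly. Continuity and non-bossiness
make the assignment a continuous function of the rate alone. Hence, if it varies with the rate, it
takes distinct values at which the agent has full support (`full_of_between`); in particular an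
agent that never has full support has no influence through its rate (`const_of_not_full`).

Let agent `i`, with order `a ≻ b ≻ c`, have full support. Efficiency excludes profitable bilateral
trades. No other agent `j` shares the order of `i` (`not_full_of_same`): `j` misses an object
whenever its rate differs from that of `i`, which makes the assignment constant in the rate of `j`,
whereas efficiency requires `j` to miss `b` when its rate is below that of `i` and not to hold both
`a` and `c` when it is above. For the remaining orders, swaps of two objects force one agent `k` to
have order `a ≻ c ≻ b` and to miss `b`, and the other to have `b` on top and to miss `a`
(`pattern`). So `k` receives `a` with probability `1 - φ i a`. This stays true after `k` swaps its
two lower objects to `a ≻ b ≻ c`, by strategy-proofness at nearly indifferent utilities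
(`swap_prob`). But then `i` and `k` share an order, neither has full support, and the assignment
does not depend on the rate of `i`. So `φ i a` takes a single value over all rates with full
support, and the assignment cannot vary with the rate.
-/

open Finset Filter Topology

/-- No ties on degenerate lotteries. -/
def NoTies (u : Fin 3 → ℝ) : Prop := ∀ x y : Fin 3, x ≠ y → u x ≠ u y

/-- A lottery over three objects. -/
def IsLottery (π : Fin 3 → ℝ) : Prop := (∀ x, 0 ≤ π x) ∧ ∑ x, π x = 1

/-- A 3×3 bistochastic matrix (rows = agents, columns = objects). -/
def Bistochastic (π : Fin 3 → Fin 3 → ℝ) : Prop :=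
  (∀ i x, 0 ≤ π i x) ∧ (∀ i, ∑ x, π i x = 1) ∧ (∀ x, ∑ i, π i x = 1)

/-- Expected utility of lottery `π` under Bernoulli utility `u`. -/
def EU (u π : Fin 3 → ℝ) : ℝ := ∑ x, u x * π x

/-- `u` and `v` induce the same strict order on objects. -/
def SameOrder (u v : Fin 3 → ℝ) : Prop := ∀ x y : Fin 3, u x > u y ↔ v x > v y

def NoTiesProfile (u : Fin 3 → Fin 3 → ℝ) : Prop := ∀ i, NoTies (u i)

/-- Utilities normalized to sum to one. -/
def Normalized (u : Fin 3 → ℝ) : Prop := ∑ x, u x = 1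

/-- Rate of middle substitution, for `u a > u b > u c`. -/
noncomputable def mu (u : Fin 3 → ℝ) (a b c : Fin 3) : ℝ := (u b - u c) / (u a - u c)

/-- Effectively the same: same strict order and same rate of middle substitution. -/
def EffSame (u v : Fin 3 → ℝ) : Prop :=
  SameOrder u v ∧ ∀ a b c : Fin 3, u a > u b → u b > u c → mu u a b c = mu v a b c

/-- The rule maps (no-ties) profiles to bistochastic matrices. -/
def BistochasticValued (φ : (Fin 3 → Fin 3 → ℝ) → Fin 3 → Fin 3 → ℝ) : Prop :=
  ∀ u, NoTiesProfile u → Bistochastic (φ u)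

def StrategyProof (φ : (Fin 3 → Fin 3 → ℝ) → Fin 3 → Fin 3 → ℝ) : Prop :=
  ∀ u i ui', NoTiesProfile u → NoTies ui' →
    EU (u i) (φ u i) ≥ EU (u i) (φ (Function.update u i ui') i)

def NonBossy (φ : (Fin 3 → Fin 3 → ℝ) → Fin 3 → Fin 3 → ℝ) : Prop :=
  ∀ u i ui', NoTiesProfile u → NoTies ui' →
    φ u i = φ (Function.update u i ui') i → φ u = φ (Function.update u i ui')

/-- `π'` Pareto-dominates `π` at `u` in expected utility. -/
def Dominates (u π' π : Fin 3 → Fin 3 → ℝ) : Prop :=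
  (∀ j, EU (u j) (π' j) ≥ EU (u j) (π j)) ∧ ∃ i, EU (u i) (π' i) > EU (u i) (π i)

def Efficient (φ : (Fin 3 → Fin 3 → ℝ) → Fin 3 → Fin 3 → ℝ) : Prop :=
  ∀ u, NoTiesProfile u → ¬ ∃ π', Bistochastic π' ∧ Dominates u π' (φ u)

/-- Normalized-cone-continuity. -/
def NCContinuous (φ : (Fin 3 → Fin 3 → ℝ) → Fin 3 → Fin 3 → ℝ) : Prop :=
  ∀ (u : Fin 3 → Fin 3 → ℝ) (i : Fin 3) (us : ℕ → Fin 3 → ℝ),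
    NoTiesProfile u → Normalized (u i) →
    (∀ k, NoTies (us k) ∧ Normalized (us k)) →
    Tendsto us atTop (nhds (u i)) →
    Tendsto (fun k => φ (Function.update u i (us k))) atTop (nhds (φ u))

/-- The labels `a`, `b`, `c` enumerate `Fin 3`; used both for agents and for objects. -/
def Distinct3 (a b c : Fin 3) : Prop := a ≠ b ∧ a ≠ c ∧ b ≠ c

/-- The utility `v` ranks the objects `a ≻ b ≻ c`. -/
def Ranks (v : Fin 3 → ℝ) (a b c : Fin 3) : Prop := v a > v b ∧ v b > v c

/-- The lottery `p` gives every object with positive probability. -/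
def IsFull (p : Fin 3 → ℝ) : Prop := ∀ x, 0 < p x

/-- The five axioms, bundled. -/
structure GoodRule (φ : (Fin 3 → Fin 3 → ℝ) → Fin 3 → Fin 3 → ℝ) : Prop where
  bist : BistochasticValued φ
  eff : Efficient φ
  sp : StrategyProof φ
  nb : NonBossy φ
  cont : NCContinuous φ

/-- The sum-one utility with order `a ≻ b ≻ c`, rate of middle substitution `t` and unit gap
between best and worst object. -/
noncomputable def pathU (a b c : Fin 3) (t : ℝ) : Fin 3 → ℝ := fun x =>
  if x = a then 1 - t / 3 else if x = b then 2 * t / 3 else -t / 3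

/-! ### Labels, orders and rates -/

lemma Distinct3.cases {a b c : Fin 3} (h : Distinct3 a b c) (x : Fin 3) :
    x = a ∨ x = b ∨ x = c := by
  obtain ⟨h1, h2, h3⟩ := h
  revert a b c x; decide

lemma Distinct3.sum {a b c : Fin 3} (h : Distinct3 a b c) (f : Fin 3 → ℝ) :
    ∑ x, f x = f a + f b + f c := by
  have : (Finset.univ : Finset (Fin 3)) = {a, b, c} := by
    ext x; simpa using h.cases x
  obtain ⟨h1, h2, h3⟩ := h
  rw [this, Finset.sum_insert (by simp [h1, h2]), Finset.sum_insert (by simp [h3]),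
    Finset.sum_singleton, add_assoc]

lemma exists_third {i j : Fin 3} (h : i ≠ j) : ∃ k, Distinct3 i j k := by
  unfold Distinct3; revert i j; decide

lemma exists_others (i : Fin 3) : ∃ j k, Distinct3 i j k := by
  unfold Distinct3; revert i; decide

lemma Ranks.distinct {v : Fin 3 → ℝ} {a b c : Fin 3} (h : Ranks v a b c) :
    Distinct3 a b c := by
  obtain ⟨h1, h2⟩ := h
  refine ⟨?_, ?_, ?_⟩ <;> rintro rfl <;> linarith

lemma Ranks.noTies {v : Fin 3 → ℝ} {a b c : Fin 3} (h : Ranks v a b c) : NoTies v := by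
  intro x y hxy
  have hd := h.distinct
  obtain ⟨h1, h2⟩ := h
  rcases hd.cases x with rfl | rfl | rfl <;> rcases hd.cases y with rfl | rfl | rfl <;>
    first
    | exact absurd rfl hxy
    | (intro he; linarith)

lemma ranks_cases {v : Fin 3 → ℝ} (hv : NoTies v) {a b c : Fin 3} (hd : Distinct3 a b c) :
    Ranks v a b c ∨ Ranks v a c b ∨ Ranks v b a c ∨ Ranks v b c a ∨ Ranks v c a b ∨
      Ranks v c b a := by
  obtain ⟨h1, h2, h3⟩ := hd
  unfold Ranks
  rcases lt_or_gt_of_ne (hv a b h1) with x | x <;> rcases lt_or_gt_of_ne (hv a c h2) with y | y <;>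
    rcases lt_or_gt_of_ne (hv b c h3) with z | z <;> grind

lemma Ranks.mu_mem {v : Fin 3 → ℝ} {a b c : Fin 3} (h : Ranks v a b c) :
    mu v a b c ∈ Set.Ioo (0 : ℝ) 1 := by
  obtain ⟨h1, h2⟩ := h
  unfold mu
  constructor
  · apply div_pos <;> linarith
  · rw [div_lt_one] <;> linarith

/-- Comparing lotteries by expected utility only involves the rate of middle substitution. -/
lemma Ranks.eu_eq {v p : Fin 3 → ℝ} {a b c : Fin 3} (h : Ranks v a b c) :
    EU v p = (v a - v c) * (p a + mu v a b c * p b) + v c * ∑ x, p x := by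
  have hac : v a - v c ≠ 0 := by
    obtain ⟨h1, h2⟩ := h
    intro h0; linarith
  rw [EU, h.distinct.sum, h.distinct.sum]
  unfold mu
  field_simp
  ring

lemma pathU_values {a b c : Fin 3} (hd : Distinct3 a b c) (t : ℝ) :
    pathU a b c t a = 1 - t / 3 ∧ pathU a b c t b = 2 * t / 3 ∧ pathU a b c t c = -t / 3 := by
  obtain ⟨h1, h2, h3⟩ := hd
  simp [pathU, h1.symm, h2.symm, h3.symm]

lemma pathU_ranks {a b c : Fin 3} (hd : Distinct3 a b c) (t : Set.Ioo (0 : ℝ) 1) :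
    Ranks (pathU a b c t) a b c := by
  obtain ⟨h1, h2, h3⟩ := pathU_values hd t
  obtain ⟨h4, h5⟩ := t.2
  unfold Ranks
  rw [h1, h2, h3]
  constructor <;> linarith

lemma pathU_mu {a b c : Fin 3} (hd : Distinct3 a b c) (t : ℝ) : mu (pathU a b c t) a b c = t := by
  obtain ⟨h1, h2, h3⟩ := pathU_values hd t
  unfold mu
  rw [h1, h2, h3]
  ring

lemma pathU_normalized {a b c : Fin 3} (hd : Distinct3 a b c) (t : ℝ) :
    Normalized (pathU a b c t) := by
  obtain ⟨h1, h2, h3⟩ := pathU_values hd t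
  unfold Normalized
  rw [hd.sum, h1, h2, h3]
  ring

lemma pathU_continuous (a b c : Fin 3) : Continuous (pathU a b c) := by
  refine continuous_pi fun x => ?_
  unfold pathU
  split_ifs <;> fun_prop

lemma NoTiesProfile.update {w : Fin 3 → Fin 3 → ℝ} (hw : NoTiesProfile w) (i : Fin 3)
    {v : Fin 3 → ℝ} (hv : NoTies v) : NoTiesProfile (Function.update w i v) := by
  intro j
  by_cases h : j = i
  · subst h; simpa using hv
  · simpa [h] using hw j

instance : PreconnectedSpace (Set.Ioo (0 : ℝ) 1) :=
  Subtype.preconnectedSpace isPreconnected_Ioo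

lemma exists_near {m : Set.Ioo (0 : ℝ) 1} {P : Set.Ioo (0 : ℝ) 1 → Prop} (h : ∀ᶠ t in 𝓝 m, P t) :
    (∃ t, m < t ∧ P t) ∧ ∃ t, t < m ∧ P t := by
  constructor
  · have := ((h.filter_mono (nhdsWithin_le_nhds (s := Set.Ioi m))).and self_mem_nhdsWithin).exists
    exact this.imp fun t ht => ⟨ht.2, ht.1⟩
  · have := ((h.filter_mono (nhdsWithin_le_nhds (s := Set.Iio m))).and self_mem_nhdsWithin).exists
    exact this.imp fun t ht => ⟨ht.2, ht.1⟩

section Rule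

variable {φ : (Fin 3 → Fin 3 → ℝ) → Fin 3 → Fin 3 → ℝ} {w : Fin 3 → Fin 3 → ℝ} {a b c : Fin 3}

/-! ### One agent's menu -/

lemma GoodRule.sum_row (G : GoodRule φ) (hw : NoTiesProfile w) (i : Fin 3)
    (hd : Distinct3 a b c) : φ w i a + φ w i b + φ w i c = 1 := by
  rw [← hd.sum]; exact (G.bist w hw).2.1 i

lemma GoodRule.sum_col (G : GoodRule φ) (hw : NoTiesProfile w) (x : Fin 3) {i j k : Fin 3}
    (hd : Distinct3 i j k) : φ w i x + φ w j x + φ w k x = 1 := by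
  rw [← hd.sum fun m => φ w m x]; exact (G.bist w hw).2.2 x

/-- Strategy-proofness in terms of the rate of middle substitution. -/
lemma GoodRule.sp_rate (G : GoodRule φ) (hw : NoTiesProfile w) (i : Fin 3)
    {v v' : Fin 3 → ℝ} (hv : Ranks v a b c) (hv' : NoTies v') :
    φ (Function.update w i v') i a + mu v a b c * φ (Function.update w i v') i b ≤
      φ (Function.update w i v) i a + mu v a b c * φ (Function.update w i v) i b := by
  have h := G.sp (Function.update w i v) i v' (hw.update i hv.noTies) hv'
  rw [Function.update_idem, Function.update_self, hv.eu_eq, hv.eu_eq,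
    (G.bist _ (hw.update i hv.noTies)).2.1, (G.bist _ (hw.update i hv')).2.1] at h
  have hpos : 0 < v a - v c := by
    obtain ⟨h1, h2⟩ := hv
    linarith
  exact le_of_mul_le_mul_left (by linarith) hpos

/-- If two reports with the same order give an agent the same probability of one object, then
the remaining mass moves between two objects that both reports rank alike, so it does not move
at all, and by non-bossiness the whole assignment is the same. -/
lemma GoodRule.eq_of_agree (G : GoodRule φ) (hw : NoTiesProfile w) (i : Fin 3)
    {v v' : Fin 3 → ℝ} (hv : Ranks v a b c) (hv' : Ranks v' a b c) (x : Fin 3)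
    (hx : φ (Function.update w i v) i x = φ (Function.update w i v') i x) :
    φ (Function.update w i v) = φ (Function.update w i v') := by
  have hd := hv.distinct
  have h1 := G.sp_rate hw i hv hv'.noTies
  have h2 := G.sp_rate hw i hv' hv.noTies
  have h3 := G.sum_row (hw.update i hv.noTies) i hd
  have h4 := G.sum_row (hw.update i hv'.noTies) i hd
  obtain ⟨m0, m1⟩ := hv.mu_mem
  obtain ⟨n0, n1⟩ := hv'.mu_mem
  have key := G.nb (Function.update w i v) i v' (hw.update i hv.noTies) hv'.noTies
  rw [Function.update_idem] at key
  apply key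
  generalize φ (Function.update w i v) i = p at *
  generalize φ (Function.update w i v') i = q at *
  generalize mu v a b c = m at *
  generalize mu v' a b c = n at *
  have hab : p a = q a ∧ p b = q b := by
    rcases hd.cases x with rfl | rfl | rfl
    · refine ⟨hx, le_antisymm ?_ ?_⟩ <;> nlinarith
    · refine ⟨le_antisymm ?_ ?_, hx⟩ <;> nlinarith
    · have hb : p b = q b := by apply le_antisymm <;> nlinarith
      exact ⟨by linarith, hb⟩
  obtain ⟨ha, hb⟩ := hab
  funext y
  rcases hd.cases y with rfl | rfl | rfl
  · exact ha
  · exact hb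
  · linarith

lemma GoodRule.continuous_path (G : GoodRule φ) (hw : NoTiesProfile w) (i : Fin 3)
    (hd : Distinct3 a b c) :
    Continuous fun t : Set.Ioo (0 : ℝ) 1 => φ (Function.update w i (pathU a b c t)) := by
  refine SeqContinuous.continuous fun ts t h => ?_
  have := G.cont (Function.update w i (pathU a b c t)) i (fun n => pathU a b c (ts n))
    (hw.update i (pathU_ranks hd t).noTies)
    (by rw [Function.update_self]; exact pathU_normalized hd _)
    (fun k => ⟨(pathU_ranks hd _).noTies, pathU_normalized hd _⟩)
    (by
      rw [Function.update_self]
      exact ((pathU_continuous a b c).tendsto _).comp ((continuous_subtype_val.tendsto t).comp h))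
  simpa only [Function.update_idem, Function.comp_def] using this

lemma GoodRule.continuous_entry (G : GoodRule φ) (hw : NoTiesProfile w) (i : Fin 3)
    (hd : Distinct3 a b c) (j x : Fin 3) :
    Continuous fun t : Set.Ioo (0 : ℝ) 1 => φ (Function.update w i (pathU a b c t)) j x :=
  (continuous_apply x).comp ((continuous_apply j).comp (G.continuous_path hw i hd))

/-- The probability of the middle object is nondecreasing in the rate of middle substitution.
Continuity then pins it down even among utilities with the same rate, so a report may be
replaced by the representative `pathU` of its order and rate. -/
lemma GoodRule.eq_path (G : GoodRule φ) (hw : NoTiesProfile w) (i : Fin 3) {v : Fin 3 → ℝ}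
    (hv : Ranks v a b c) :
    φ (Function.update w i v) = φ (Function.update w i (pathU a b c (mu v a b c))) := by
  have hd := hv.distinct
  obtain ⟨m, hm⟩ : ∃ m : Set.Ioo (0 : ℝ) 1, (m : ℝ) = mu v a b c := ⟨⟨_, hv.mu_mem⟩, rfl⟩
  rw [← hm]
  refine G.eq_of_agree hw i hv (pathU_ranks hd m) b ?_
  have hmono : ∀ t : Set.Ioo (0 : ℝ) 1, 0 ≤ ((m : ℝ) - t) *
      (φ (Function.update w i v) i b - φ (Function.update w i (pathU a b c t)) i b) := by
    intro t
    have h1 := G.sp_rate hw i hv (pathU_ranks hd t).noTies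
    have h2 := G.sp_rate hw i (pathU_ranks hd t) hv.noTies
    rw [← hm] at h1
    rw [pathU_mu hd] at h2
    linarith
  have hc := (G.continuous_entry hw i hd i b).tendsto m
  rcases lt_trichotomy (φ (Function.update w i v) i b)
    (φ (Function.update w i (pathU a b c m)) i b) with h | h | h
  · obtain ⟨-, t, ht, h2⟩ := exists_near (hc.eventually (lt_mem_nhds h))
    have ht' : (t : ℝ) < m := ht
    nlinarith [hmono t]
  · exact h
  · obtain ⟨⟨t, ht, h2⟩, -⟩ := exists_near (hc.eventually (gt_mem_nhds h))
    have ht' : (m : ℝ) < t := ht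
    nlinarith [hmono t]

/-- If the probability of the middle object at rate `r` lies strictly between its values at two
other rates, then at rate `r` the agent has full support: the probabilities of the best and of
the worst object decrease strictly when that of the middle object increases. -/
lemma GoodRule.full_of_between (G : GoodRule φ) (hw : NoTiesProfile w) (i : Fin 3)
    (hd : Distinct3 a b c) (s t r : Set.Ioo (0 : ℝ) 1)
    (h1 : φ (Function.update w i (pathU a b c s)) i b < φ (Function.update w i (pathU a b c r)) i b)
    (h2 : φ (Function.update w i (pathU a b c r)) i b <
      φ (Function.update w i (pathU a b c t)) i b) :
    IsFull (φ (Function.update w i (pathU a b c r)) i) := by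
  have e1 := G.sp_rate hw i (pathU_ranks hd r) (pathU_ranks hd t).noTies
  have e2 := G.sp_rate hw i (pathU_ranks hd t) (pathU_ranks hd r).noTies
  rw [pathU_mu hd] at e1 e2
  have hs := (G.bist _ (hw.update i (pathU_ranks hd s).noTies)).1 i b
  have hta := (G.bist _ (hw.update i (pathU_ranks hd t).noTies)).1 i a
  have htc := (G.bist _ (hw.update i (pathU_ranks hd t).noTies)).1 i c
  have e3 := G.sum_row (hw.update i (pathU_ranks hd r).noTies) i hd
  have e4 := G.sum_row (hw.update i (pathU_ranks hd t).noTies) i hd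
  obtain ⟨r0, r1⟩ := r.2
  obtain ⟨t0, t1⟩ := t.2
  intro x
  rcases hd.cases x with rfl | rfl | rfl <;> nlinarith

/-- An agent whose order is held fixed and who never has full support cannot influence the
assignment by its rate of middle substitution. -/
lemma GoodRule.const_of_not_full (G : GoodRule φ) (hw : NoTiesProfile w) (i : Fin 3)
    (hd : Distinct3 a b c)
    (hf : ∀ t : Set.Ioo (0 : ℝ) 1, ¬ IsFull (φ (Function.update w i (pathU a b c t)) i))
    {v v' : Fin 3 → ℝ} (hv : Ranks v a b c) (hv' : Ranks v' a b c) :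
    φ (Function.update w i v) = φ (Function.update w i v') := by
  have key : ∀ s t : Set.Ioo (0 : ℝ) 1, ¬ φ (Function.update w i (pathU a b c s)) i b <
      φ (Function.update w i (pathU a b c t)) i b := by
    intro s t h
    obtain ⟨y, hy1, hy2⟩ := exists_between h
    obtain ⟨r, rfl⟩ := intermediate_value_univ s t (G.continuous_entry hw i hd i b)
      ⟨hy1.le, hy2.le⟩
    exact hf r (G.full_of_between hw i hd s t r hy1 hy2)
  refine G.eq_of_agree hw i hv hv' b ?_
  rw [G.eq_path hw i hv, G.eq_path hw i hv']
  exact le_antisymm (not_lt.1 (key ⟨_, hv'.mu_mem⟩ ⟨_, hv.mu_mem⟩))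
    (not_lt.1 (key ⟨_, hv.mu_mem⟩ ⟨_, hv'.mu_mem⟩))

/-! ### Efficiency: bilateral trades -/

/-- There is no feasible bilateral trade `d` (agent `i` receives `d`, agent `j` gives it up) that
benefits both agents. -/
lemma GoodRule.no_trade (G : GoodRule φ) (hw : NoTiesProfile w) {i j : Fin 3} (hij : i ≠ j)
    (d : Fin 3 → ℝ) (hsum : ∑ x, d x = 0) (hi : ∀ x, d x < 0 → 0 < φ w i x)
    (hj : ∀ x, 0 < d x → 0 < φ w j x) (hgi : 0 < EU (w i) d) (hgj : EU (w j) d < 0) : False := by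
  obtain ⟨k, hd⟩ := exists_third hij
  have hB := G.bist w hw
  have ev : ∀ᶠ ε in 𝓝[>] (0 : ℝ), ∀ x, 0 ≤ φ w i x + ε * d x ∧ 0 ≤ φ w j x - ε * d x := by
    refine Filter.eventually_all.2 fun x => Filter.Eventually.and ?_ ?_
    · by_cases h : d x < 0
      · have ht : Tendsto (fun ε : ℝ => φ w i x + ε * d x) (𝓝 0) (𝓝 (φ w i x)) := by
          have : Continuous fun ε : ℝ => φ w i x + ε * d x := by fun_prop
          simpa using this.tendsto 0
        exact ((ht.eventually (lt_mem_nhds (hi x h))).filter_mono nhdsWithin_le_nhds).mono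
          fun _ h => h.le
      · filter_upwards [self_mem_nhdsWithin] with ε hε
        have := mul_nonneg (le_of_lt (Set.mem_Ioi.1 hε)) (not_lt.1 h)
        linarith [hB.1 i x]
    · by_cases h : 0 < d x
      · have ht : Tendsto (fun ε : ℝ => φ w j x - ε * d x) (𝓝 0) (𝓝 (φ w j x)) := by
          have : Continuous fun ε : ℝ => φ w j x - ε * d x := by fun_prop
          simpa using this.tendsto 0
        exact ((ht.eventually (lt_mem_nhds (hj x h))).filter_mono nhdsWithin_le_nhds).mono
          fun _ h => h.le
      · filter_upwards [self_mem_nhdsWithin] with ε hε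
        have := mul_nonneg (le_of_lt (Set.mem_Ioi.1 hε)) (neg_nonneg.2 (not_lt.1 h))
        linarith [hB.1 j x]
  obtain ⟨ε, hε, hε0⟩ := (ev.and self_mem_nhdsWithin).exists
  have hε0 : 0 < ε := hε0
  obtain ⟨d1, d2, d3⟩ := id hd
  set π : Fin 3 → Fin 3 → ℝ := fun m =>
    if m = i then fun x => φ w i x + ε * d x
    else if m = j then fun x => φ w j x - ε * d x else φ w k with hπ
  have pi_i : π i = fun x => φ w i x + ε * d x := by simp [hπ]
  have pi_j : π j = fun x => φ w j x - ε * d x := by simp [hπ, d1.symm]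
  have pi_k : π k = φ w k := by simp [hπ, d2.symm, d3.symm]
  have eu_i : EU (w i) (π i) = EU (w i) (φ w i) + ε * EU (w i) d := by
    simp only [EU, pi_i, Finset.mul_sum, ← Finset.sum_add_distrib]
    exact Finset.sum_congr rfl fun x _ => by ring
  have eu_j : EU (w j) (π j) = EU (w j) (φ w j) - ε * EU (w j) d := by
    simp only [EU, pi_j, Finset.mul_sum, ← Finset.sum_sub_distrib]
    exact Finset.sum_congr rfl fun x _ => by ring
  have hgi' := mul_pos hε0 hgi
  have hgj' := mul_neg_of_pos_of_neg hε0 hgj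
  refine G.eff w hw ⟨π, ⟨?_, ?_, ?_⟩, ?_, i, by rw [eu_i]; linarith⟩
  · intro m x
    rcases hd.cases m with rfl | rfl | rfl
    · rw [pi_i]; exact (hε x).1
    · rw [pi_j]; exact (hε x).2
    · rw [pi_k]; exact hB.1 _ x
  · intro m
    rcases hd.cases m with rfl | rfl | rfl
    · rw [pi_i, Finset.sum_add_distrib, ← Finset.mul_sum, hsum, hB.2.1]; ring
    · rw [pi_j, Finset.sum_sub_distrib, ← Finset.mul_sum, hsum, hB.2.1]; ring
    · rw [pi_k]; exact hB.2.1 _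
  · intro x
    rw [hd.sum, pi_i, pi_j, pi_k]
    linarith [G.sum_col hw x hd]
  · intro m
    rcases hd.cases m with rfl | rfl | rfl
    · rw [eu_i]; linarith
    · rw [eu_j]; linarith
    · rw [pi_k]

lemma GoodRule.no_swap (G : GoodRule φ) (hw : NoTiesProfile w) {i j x y : Fin 3} (hij : i ≠ j)
    (hi : 0 < φ w i x) (hj : 0 < φ w j y) (h1 : w i x < w i y) (h2 : w j y < w j x) : False := by
  have hxy : x ≠ y := by rintro rfl; exact lt_irrefl _ h1
  obtain ⟨z, hd⟩ := exists_third hxy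
  obtain ⟨d1, d2, d3⟩ := id hd
  refine G.no_trade hw hij (fun o => if o = x then -1 else if o = y then 1 else 0) ?_ ?_ ?_ ?_ ?_
  · rw [hd.sum]; simp [d1.symm, d2.symm, d3.symm]
  · intro o ho
    rcases hd.cases o with rfl | rfl | rfl
    · exact hi
    · simp [d1.symm] at ho; linarith
    · simp [d2.symm, d3.symm] at ho
  · intro o ho
    rcases hd.cases o with rfl | rfl | rfl
    · simp at ho; linarith
    · exact hj
    · simp [d2.symm, d3.symm] at ho
  · rw [EU, hd.sum]; simp [d1.symm, d2.symm, d3.symm]; linarith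
  · rw [EU, hd.sum]; simp [d1.symm, d2.symm, d3.symm]; linarith

/-- Of two agents with the same order, the one with the higher rate of middle substitution must
not hold both extreme objects while the other holds the middle one. -/
lemma GoodRule.no_mid_trade (G : GoodRule φ) (hw : NoTiesProfile w) {i j : Fin 3} (hij : i ≠ j)
    (hi : Ranks (w i) a b c) (hj : Ranks (w j) a b c)
    (hmu : mu (w j) a b c < mu (w i) a b c)
    (ha : 0 < φ w i a) (hc : 0 < φ w i c) (hb : 0 < φ w j b) : False := by
  have hd := hi.distinct
  obtain ⟨d1, d2, d3⟩ := id hd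
  obtain ⟨θ, h1, h2⟩ := exists_between hmu
  have m0 := hj.mu_mem.1
  have m1 := hi.mu_mem.2
  have hsum : ∑ o, (fun o => if o = a then -θ else if o = b then 1 else -(1 - θ)) o = 0 := by
    rw [hd.sum]; simp [d1.symm, d2.symm, d3.symm]
  refine G.no_trade hw hij (fun o => if o = a then -θ else if o = b then 1 else -(1 - θ))
    hsum ?_ ?_ ?_ ?_
  · intro o ho
    rcases hd.cases o with rfl | rfl | rfl
    · exact ha
    · simp [d1.symm] at ho; linarith
    · exact hc
  · intro o ho
    rcases hd.cases o with rfl | rfl | rfl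
    · simp at ho; linarith
    · exact hb
    · simp [d2.symm, d3.symm] at ho; linarith
  · rw [hi.eu_eq, hsum]
    simp [d1.symm]
    obtain ⟨h3, h4⟩ := hi
    apply mul_pos <;> linarith
  · rw [hj.eu_eq, hsum]
    simp [d1.symm]
    obtain ⟨h3, h4⟩ := hj
    apply mul_neg_of_pos_of_neg <;> linarith

/-! ### Full support -/

/-- When an agent has full support, no other agent receives an object with certainty. -/
lemma GoodRule.pos_of_full (G : GoodRule φ) (hw : NoTiesProfile w) {i j : Fin 3} (hij : i ≠ j)
    (hf : IsFull (φ w i)) {x y z : Fin 3} (hd : Distinct3 x y z) (hx : φ w j x = 0)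
    (hy : φ w j y = 0) : False := by
  obtain ⟨k, hk⟩ := exists_third hij
  have h1 := G.sum_col hw z hk
  have h2 := G.sum_row hw j hd
  linarith [hf z, (G.bist w hw).1 k z]

/-- An agent with full support shares its order with no other agent. Suppose agents `i` and `j`
share an order and `i` has full support. While the rate of `j` differs from that of `i`,
efficiency makes `j` miss an object, hence the assignment is locally constant in that rate.
By connectedness it is constant, also across the rate of `i`, where efficiency requires the
missing object to change. -/
lemma GoodRule.not_full_of_same (G : GoodRule φ) (hw : NoTiesProfile w) {i j : Fin 3}
    (hij : i ≠ j) (hi : Ranks (w i) a b c) (hj : Ranks (w j) a b c) : ¬ IsFull (φ w i) := by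
  intro hfull
  have hd := hi.distinct
  set Ψ : Set.Ioo (0 : ℝ) 1 → Fin 3 → Fin 3 → ℝ :=
    fun t => φ (Function.update w j (pathU a b c t)) with hΨ
  have hcont : Continuous Ψ := G.continuous_path hw j hd
  have hprof : ∀ t : Set.Ioo (0 : ℝ) 1, NoTiesProfile (Function.update w j (pathU a b c t)) :=
    fun t => hw.update j (pathU_ranks hd t).noTies
  have hpos : ∀ t k x, 0 < Ψ t k x → ∀ᶠ s in 𝓝 t, 0 < Ψ s k x := fun t k x h =>
    ((G.continuous_entry hw j hd k x).tendsto t).eventually (lt_mem_nhds h)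
  have hfullnear : ∀ t, IsFull (Ψ t i) → ∀ᶠ s in 𝓝 t, IsFull (Ψ s i) := fun t h =>
    Filter.eventually_all.2 fun x => hpos t i x (h x)
  obtain ⟨r, hr⟩ : ∃ r : Set.Ioo (0 : ℝ) 1, (r : ℝ) = mu (w i) a b c := ⟨⟨_, hi.mu_mem⟩, rfl⟩
  have hiR : ∀ t : Set.Ioo (0 : ℝ) 1, Function.update w j (pathU a b c t) i = w i :=
    fun t => by simp [hij]
  have hjR : ∀ t : Set.Ioo (0 : ℝ) 1, Function.update w j (pathU a b c t) j = pathU a b c t :=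
    fun t => by simp
  have hlow : ∀ t, t < r → IsFull (Ψ t i) → Ψ t j b = 0 := by
    intro t ht hf
    by_contra h0
    refine G.no_mid_trade (hprof t) hij (by rw [hiR]; exact hi)
      (by rw [hjR]; exact pathU_ranks hd t) ?_ (hf a) (hf c)
      (lt_of_le_of_ne ((G.bist _ (hprof t)).1 j b) (Ne.symm h0))
    rw [hiR, hjR, pathU_mu hd, ← hr]
    exact ht
  have hhigh : ∀ t, r < t → IsFull (Ψ t i) → 0 < Ψ t j a → 0 < Ψ t j c → False := by
    intro t ht hf h1 h2
    refine G.no_mid_trade (hprof t) hij.symm (by rw [hjR]; exact pathU_ranks hd t)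
      (by rw [hiR]; exact hi) ?_ h1 h2 (hf b)
    rw [hiR, hjR, pathU_mu hd, ← hr]
    exact ht
  have hmiss : ∀ t, t ≠ r → IsFull (Ψ t i) → ∃ x, Ψ t j x = 0 := by
    intro t ht hf
    rcases lt_or_gt_of_ne ht with h | h
    · exact ⟨b, hlow t h hf⟩
    · by_contra! hne
      have hp : ∀ x, 0 < Ψ t j x := fun x =>
        lt_of_le_of_ne ((G.bist _ (hprof t)).1 j x) (Ne.symm (hne x))
      exact hhigh t h hf (hp a) (hp c)
  obtain ⟨m, hm⟩ : ∃ m : Set.Ioo (0 : ℝ) 1, (m : ℝ) = mu (w j) a b c := ⟨⟨_, hj.mu_mem⟩, rfl⟩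
  have hΨm : Ψ m = φ w := by
    have := G.eq_path hw j hj
    rw [Function.update_eq_self] at this
    rw [this, ← hm]
  -- A base point at which the two rates differ.
  obtain ⟨t₁, ht₁, hf₁⟩ : ∃ t, t ≠ r ∧ IsFull (Ψ t i) := by
    obtain ⟨⟨s, hs, hfs⟩, -⟩ := exists_near (hfullnear m (by rw [hΨm]; exact hfull))
    by_cases h : m = r
    · exact ⟨s, fun h' => by rw [h, h'] at hs; exact lt_irrefl _ hs, hfs⟩
    · exact ⟨m, h, by rw [hΨm]; exact hfull⟩
  obtain ⟨x, hx⟩ := hmiss t₁ ht₁ hf₁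
  have hother : ∀ y, y ≠ x → 0 < Ψ t₁ j y := by
    intro y hy
    obtain ⟨z, hz⟩ := exists_third hy
    refine lt_of_le_of_ne ((G.bist _ (hprof t₁)).1 j y) fun h0 => ?_
    exact G.pos_of_full (hprof t₁) hij (by exact hf₁) hz h0.symm hx
  have hnear : ∀ t, Ψ t = Ψ t₁ → ∀ᶠ s in 𝓝 t, IsFull (Ψ s i) ∧ ∀ y, y ≠ x → 0 < Ψ s j y := by
    intro t ht
    refine (hfullnear t (by rw [ht]; exact hf₁)).and (Filter.eventually_all.2 fun y => ?_)
    by_cases hy : y = x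
    · exact Filter.Eventually.of_forall fun s h => absurd hy h
    · exact (hpos t j y (by rw [ht]; exact hother y hy)).mono fun s h _ => h
  have hclopen : IsClopen {t | Ψ t = Ψ t₁} := by
    refine ⟨isClosed_eq hcont continuous_const, isOpen_iff_mem_nhds.2 fun t ht => ?_⟩
    by_cases hrt : t = r
    · -- To the left of `r` the missing object is the middle one, to the right it is not.
      exfalso
      obtain ⟨⟨s, hs, hsf, hsp⟩, s', hs', hsf', hsp'⟩ := exists_near (hnear t ht)
      rw [hrt] at hs hs'
      have hb := hlow s' hs' hsf'
      have hbx : b = x := by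
        by_contra h
        exact (hsp' b h).ne' hb
      subst hbx
      exact hhigh s hs hsf (hsp a hd.1) (hsp c hd.2.2.symm)
    · filter_upwards [hnear t ht, isOpen_ne.mem_nhds hrt] with s hs hsr
      obtain ⟨y, hy⟩ := hmiss s hsr hs.1
      have hyx : y = x := by
        by_contra h
        exact (hs.2 y h).ne' hy
      subst hyx
      exact G.eq_of_agree hw j (pathU_ranks hd s) (pathU_ranks hd t₁) y (hy.trans hx.symm)
  have huniv : ∀ t, Ψ t = Ψ t₁ := fun t => by
    have h : {t | Ψ t = Ψ t₁} = Set.univ := hclopen.eq_univ ⟨t₁, rfl⟩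
    exact (Set.eq_univ_iff_forall.1 h) t
  obtain ⟨⟨s, hs, hsf, hsp⟩, s', hs', hsf', hsp'⟩ := exists_near (hnear r (huniv r))
  have hb := hlow s' hs' hsf'
  have hbx : b = x := by
    by_contra h
    exact (hsp' b h).ne' hb
  subst hbx
  exact hhigh s hs hsf (hsp a hd.1) (hsp c hd.2.2.symm)

/-- The orders of the others when an agent with order `a ≻ b ≻ c` has full support: one of them
has order `a ≻ c ≻ b` and misses `b`, the other has `b` on top and misses `a`. -/
lemma GoodRule.pattern (G : GoodRule φ) (hw : NoTiesProfile w) {i : Fin 3}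
    (hi : Ranks (w i) a b c) (hf : IsFull (φ w i)) :
    ∃ j k, Distinct3 i j k ∧ Ranks (w k) a c b ∧ w j a < w j b ∧ w j c < w j b ∧
      φ w k b = 0 ∧ φ w j a = 0 := by
  have hd := hi.distinct
  obtain ⟨i1, i2⟩ := id hi
  have zero : ∀ j, i ≠ j → ∀ x y, w i x < w i y → w j y < w j x → φ w j y = 0 := by
    intro j hij x y h1 h2
    by_contra h0
    exact G.no_swap hw hij (hf x) (lt_of_le_of_ne ((G.bist w hw).1 j y) (Ne.symm h0)) h1 h2
  have cls : ∀ j, i ≠ j → (Ranks (w j) a c b ∧ φ w j b = 0) ∨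
      (w j a < w j b ∧ w j c < w j b ∧ φ w j a = 0) := by
    intro j hij
    rcases ranks_cases (hw j) hd with h | h | h | h | h | h
    · exact absurd hf (G.not_full_of_same hw hij hi h)
    · exact Or.inl ⟨h, zero j hij c b i2 h.2⟩
    · exact Or.inr ⟨h.1, h.2.trans h.1, zero j hij b a i1 h.1⟩
    · exact Or.inr ⟨h.2.trans h.1, h.1, zero j hij b a i1 (h.2.trans h.1)⟩
    · exact (G.pos_of_full hw hij hf hd (zero j hij c a (i2.trans i1) h.1)
        (zero j hij c b i2 (h.2.trans h.1))).elim
    · exact (G.pos_of_full hw hij hf hd (zero j hij c a (i2.trans i1) (h.2.trans h.1))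
        (zero j hij c b i2 h.1)).elim
  obtain ⟨j, k, hjk⟩ := exists_others i
  obtain ⟨d1, d2, d3⟩ := id hjk
  have nosame : ∀ x, φ w j x = 0 → φ w k x = 0 → False := by
    intro x h1 h2
    obtain ⟨y, z, hx⟩ := exists_others x
    have := G.sum_col hw x hjk
    have := G.sum_row hw i hx
    linarith [hf y, hf z]
  rcases cls j d1 with hj | hj <;> rcases cls k d2 with hk | hk
  · exact (nosame b hj.2 hk.2).elim
  · exact ⟨k, j, ⟨d2, d1, d3.symm⟩, hj.1, hk.1, hk.2.1, hj.2, hk.2.2⟩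
  · exact ⟨j, k, hjk, hk.1, hj.1, hj.2.1, hk.2, hj.2.2⟩
  · exact (nosame a hj.2.2 hk.2.2).elim

/-- At orders `a ≻ b ≻ c`, `b`-on-top, `a ≻ c ≻ b` of `i`, `j`, `k`, agent `k` never has full
support. -/
lemma GoodRule.third_not_full (G : GoodRule φ) (hw : NoTiesProfile w) {i j k : Fin 3}
    (hijk : Distinct3 i j k) (hi : Ranks (w i) a b c) (hk : Ranks (w k) a c b)
    (hj1 : w j a < w j b) (hj2 : w j c < w j b) : ¬ IsFull (φ w k) := by
  intro hf
  obtain ⟨j', k', hd, h1, -, h3, -, -⟩ := G.pattern hw hk hf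
  obtain ⟨d1, d2, d3⟩ := hd
  rcases hijk.cases j with h | h | h
  · exact hijk.1 h.symm
  · rcases hijk.cases j' with rfl | rfl | rfl
    · exact absurd h3 (not_lt.2 hi.2.le)
    · exact absurd h3 (not_lt.2 hj2.le)
    · exact d1 rfl
  · exact hijk.2.2 h

/-- In the situation described by `GoodRule.pattern`, agent `k` receives `a` with probability
`1 - φ w i a`, the rest of `a` being held by `i`. If `k` swaps its two lower objects, then that
probability does not change: neither before nor after the swap does it depend on the rate of `k`,
and the two lower objects can be made nearly indifferent. -/
lemma GoodRule.swap_prob (G : GoodRule φ) (hw : NoTiesProfile w) {i j k : Fin 3}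
    (hijk : Distinct3 i j k) (hi : Ranks (w i) a b c) (hk : Ranks (w k) a c b)
    (hj1 : w j a < w j b) (hj2 : w j c < w j b) (hkb : φ w k b = 0) (hja : φ w j a = 0)
    {v : Fin 3 → ℝ} (hv : Ranks v a b c) :
    φ (Function.update w k v) k a = 1 - φ w i a := by
  have hd := hi.distinct
  have hd' := hk.distinct
  obtain ⟨d1, d2, d3⟩ := id hijk
  have hself : ∀ t : Set.Ioo (0 : ℝ) 1, φ (Function.update w k (pathU a c b t)) = φ w := by
    intro t
    conv_rhs => rw [← Function.update_eq_self k w]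
    refine G.const_of_not_full hw k hd' (fun s => ?_) (pathU_ranks hd' t) hk
    refine G.third_not_full (hw.update k (pathU_ranks hd' s).noTies) hijk (a := a) (b := b) (c := c)
      ?_ ?_ ?_ ?_
    · simpa [d2] using hi
    · simpa using pathU_ranks hd' s
    · simpa [d3] using hj1
    · simpa [d3] using hj2
  have hswap : ∀ t : Set.Ioo (0 : ℝ) 1,
      φ (Function.update w k (pathU a b c t)) = φ (Function.update w k v) := by
    intro t
    refine G.const_of_not_full hw k hd (fun s => ?_) (pathU_ranks hd t) hv
    refine G.not_full_of_same (hw.update k (pathU_ranks hd s).noTies) d2.symm (a := a) (b := b)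
      (c := c) ?_ ?_
    · simpa using pathU_ranks hd s
    · simpa [d2] using hi
  have hcol := G.sum_col hw a hijk
  have hrow := G.sum_row hw k hd
  have hB := (G.bist _ (hw.update k hv.noTies)).1 k
  have hrow' := G.sum_row (hw.update k hv.noTies) k hd
  have hB0 := (G.bist _ hw).1 k
  have up : ∀ t : Set.Ioo (0 : ℝ) 1, φ (Function.update w k v) k a ≤ 1 - φ w i a + t := by
    intro t
    have h := G.sp_rate hw k (pathU_ranks hd' t) hv.noTies
    rw [pathU_mu hd', hself] at h
    obtain ⟨t0, t1⟩ := t.2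
    nlinarith [mul_nonneg t0.le (hB c), hB0 a, hB0 c]
  have down : ∀ t : Set.Ioo (0 : ℝ) 1, 1 - φ w i a ≤ φ (Function.update w k v) k a + t := by
    intro t
    have h := G.sp_rate hw k (pathU_ranks hd t) hk.noTies
    rw [pathU_mu hd, hswap, Function.update_eq_self] at h
    obtain ⟨t0, t1⟩ := t.2
    nlinarith [hB a, hB b, hB c]
  have small : ∀ x y : ℝ, (∀ t : Set.Ioo (0 : ℝ) 1, x ≤ y + t) → x ≤ y := by
    intro x y h
    refine le_of_forall_pos_le_add fun ε hε => ?_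
    have := h ⟨min ε (1 / 2), lt_min hε (by norm_num),
      lt_of_le_of_lt (min_le_right _ _) (by norm_num)⟩
    exact this.trans (by simp)
  exact le_antisymm (small _ _ up) (small _ _ down)

/-! ### Rates are irrelevant -/

/-- The probability of the middle object does not depend on the rate of middle substitution. -/
lemma GoodRule.not_lt_path (G : GoodRule φ) (hw : NoTiesProfile w) (i : Fin 3)
    (hd : Distinct3 a b c) (s t : Set.Ioo (0 : ℝ) 1) :
    ¬ φ (Function.update w i (pathU a b c s)) i b <
      φ (Function.update w i (pathU a b c t)) i b := by
  intro h
  -- Two intermediate values give two rates with full support and different lotteries.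
  obtain ⟨y₁, h1, h2⟩ := exists_between h
  obtain ⟨y₂, h3, h4⟩ := exists_between h2
  obtain ⟨r₁, rfl⟩ := intermediate_value_univ s t (G.continuous_entry hw i hd i b) ⟨h1.le, h2.le⟩
  obtain ⟨r₂, rfl⟩ := intermediate_value_univ s t (G.continuous_entry hw i hd i b)
    ⟨(h1.trans h3).le, h4.le⟩
  have f1 := G.full_of_between hw i hd s t r₁ h1 h2
  have f2 := G.full_of_between hw i hd s t r₂ (h1.trans h3) h4
  have w1 := hw.update i (pathU_ranks hd r₁).noTies
  have w2 := hw.update i (pathU_ranks hd r₂).noTies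
  have R1 : Ranks (Function.update w i (pathU a b c r₁) i) a b c := by
    simpa using pathU_ranks hd r₁
  have R2 : Ranks (Function.update w i (pathU a b c r₂) i) a b c := by
    simpa using pathU_ranks hd r₂
  obtain ⟨j, k, hijk, hk, hj1, hj2, hkb, hja⟩ := G.pattern w1 R1 f1
  obtain ⟨j', k', hijk', hk', hj1', hj2', hkb₂, hja₂⟩ := G.pattern w2 R2 f2
  obtain ⟨d1, d2, d3⟩ := id hijk
  obtain ⟨e1, e2, e3⟩ := id hijk'
  simp only [Function.update_of_ne e1.symm, Function.update_of_ne e2.symm] at hk' hj1' hj2'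
  simp only [Function.update_of_ne d1.symm, Function.update_of_ne d2.symm] at hk hj1 hj2
  -- The orders of the other agents do not depend on the rate of `i`.
  have hkk : k' = k := by
    rcases hijk.cases k' with h | h | h
    · exact absurd h e2.symm
    · subst h
      exact absurd hj2 (not_lt.2 hk'.2.le)
    · exact h
  subst hkk
  have hjj : j' = j := by
    rcases hijk.cases j' with h | h | h
    · exact absurd h e1.symm
    · exact h
    · exact absurd h e3
  subst hjj
  have hv := pathU_ranks hd r₁
  have p1 := G.swap_prob w1 hijk R1 (by simpa [d2.symm] using hk) (by simpa [d1.symm] using hj1)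
    (by simpa [d1.symm] using hj2) hkb hja hv
  have p2 := G.swap_prob w2 hijk R2 (by simpa [d2.symm] using hk) (by simpa [d1.symm] using hj1)
    (by simpa [d1.symm] using hj2) hkb₂ hja₂ hv
  -- After the swap, `i` and `k` share an order, so the rate of `i` has no influence.
  have heq : φ (Function.update (Function.update w k' (pathU a b c r₁)) i (pathU a b c r₁)) =
      φ (Function.update (Function.update w k' (pathU a b c r₁)) i (pathU a b c r₂)) := by
    refine G.const_of_not_full (hw.update k' hv.noTies) i hd (fun q => ?_) hv (pathU_ranks hd r₂)
    refine G.not_full_of_same ((hw.update k' hv.noTies).update i (pathU_ranks hd q).noTies) d2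
      (a := a) (b := b) (c := c) ?_ ?_
    · simpa using pathU_ranks hd q
    · simpa [d2.symm] using hv
  rw [Function.update_comm d2] at p1 p2
  rw [heq] at p1
  have ha : φ (Function.update w i (pathU a b c r₁)) i a =
      φ (Function.update w i (pathU a b c r₂)) i a := by linarith
  have := G.eq_of_agree hw i (pathU_ranks hd r₁) (pathU_ranks hd r₂) a ha
  exact h3.ne (by simp only [this])

end Rule

theorem stmt11 (φ : (Fin 3 → Fin 3 → ℝ) → Fin 3 → Fin 3 → ℝ)
    (hB : BistochasticValued φ) (hE : Efficient φ) (hSP : StrategyProof φ)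
    (hNB : NonBossy φ) (hC : NCContinuous φ)
    (u : Fin 3 → Fin 3 → ℝ) (hu : NoTiesProfile u) (i : Fin 3)
    (hsupp : (Finset.univ.filter (fun x => φ u i x ≠ 0)).card ≤ 2)
    (ui' : Fin 3 → ℝ) (hui' : NoTies ui') (hsame : SameOrder ui' (u i)) :
    φ (Function.update u i ui') = φ u := by
  have G : GoodRule φ := ⟨hB, hE, hSP, hNB, hC⟩
  obtain ⟨a, b, c, hv⟩ : ∃ a b c, Ranks (u i) a b c := by
    rcases ranks_cases (hu i) (a := 0) (b := 1) (c := 2) (by unfold Distinct3; decide) with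
      h | h | h | h | h | h <;> exact ⟨_, _, _, h⟩
  have hv' : Ranks ui' a b c := ⟨(hsame a b).2 hv.1, (hsame b c).2 hv.2⟩
  have hd := hv.distinct
  conv_rhs => rw [← Function.update_eq_self i u]
  refine G.eq_of_agree hu i hv' hv b ?_
  rw [G.eq_path hu i hv', G.eq_path hu i hv]
  exact le_antisymm (not_lt.1 (G.not_lt_path hu i hd ⟨_, hv.mu_mem⟩ ⟨_, hv'.mu_mem⟩))
    (not_lt.1 (G.not_lt_path hu i hd ⟨_, hv'.mu_mem⟩ ⟨_, hv.mu_mem⟩))
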